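/- Let P₀, P₁, P₂ and Q₀, Q₁, Q₂ be two affinely independent triples of points in ℝ², defining triangles T = conv{P₀, P₁, P₂} and T' = conv{Q₀, Q₁, Q₂}. Let h, h' > 0 and let u, u' be normalized Dirichlet eigenfunctions on T and T' respectively. Suppose that for each pair {i, j} ⊆ {0, 1, 2} with i ≠ j, ∫_{[Pᵢ, Pⱼ]} |h ∂_ν u|² dS = ∫_{[Qᵢ, Qⱼ]} |h' ∂_ν u'|² dS, where [Pᵢ, Pⱼ] denotes the side joining Pᵢ and Pⱼ and ν is the outward unit normal to that side. Then the corresponding side lengths are equal: dist(Pᵢ, Pⱼ) = dist(Qᵢ, Qⱼ) for all i ≠ j; that is, T and T' are congruent (T' is the image of T under an isometry of ℝ²). -/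

import Mathlib

open MeasureTheory RealInnerProductSpace

/-- The (unscaled) Laplacian `Δu = Σⱼ ∂²u/∂xⱼ²`. -/
noncomputable def lap {n : ℕ} (u : EuclideanSpace ℝ (Fin n) → ℝ)
    (x : EuclideanSpace ℝ (Fin n)) : ℝ :=
  ∑ i, fderiv ℝ (fun y => fderiv ℝ u y (EuclideanSpace.single i 1)) x
    (EuclideanSpace.single i 1)

/-!
Let `z` be the vertex opposite the side `[x, y]` of the triangle `T`. For an eigenfunction
`-h²Δu = u`, the Pohozaev field built from the dilations about `z` has divergence `2u²` in dimension
two. Since `u` vanishes on the boundary, `∇u` is normal there and the flux density of the field is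
`⟪w - z, ν⟫ (h ∂_ν u)²`, which is zero on the two sides through `z` and equals the height of `T`
over `[x, y]` times `(h ∂_ν u)²` on `[x, y]`. The divergence theorem, applied to this field and to
`w - z` itself, gives

  `|T| ∫_{[x, y]} (h ∂_ν u)² dS = |x - y| ∫_T u²`.

For normalized eigenfunctions with equal Neumann masses the side lengths of the two triangles are
therefore proportional, with ratio `|T'| / |T|`. But the area ratio of similar triangles is the
square of the ratio of their sides, so the ratio is `1`.
-/

section Divergence

open InnerProductSpace Module
open scoped Gradient Laplacian

variable {E : Type*} [NormedAddCommGroup E] [InnerProductSpace ℝ E]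
  {u f : E → ℝ} {V W : E → E} {x : E}

/-- The divergence of a vector field, as the trace of its Fréchet derivative
(so `0` where the field is not differentiable). -/
noncomputable def divergence (V : E → E) (x : E) : ℝ :=
  LinearMap.trace ℝ E (fderiv ℝ V x)

lemma divergence_add (hV : DifferentiableAt ℝ V x) (hW : DifferentiableAt ℝ W x) :
    divergence (V + W) x = divergence V x + divergence W x := by
  simp only [divergence, fderiv_add hV hW, ContinuousLinearMap.toLinearMap_add, map_add]

lemma divergence_sub (hV : DifferentiableAt ℝ V x) (hW : DifferentiableAt ℝ W x) :
    divergence (V - W) x = divergence V x - divergence W x := by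
  simp only [divergence, fderiv_sub hV hW, ContinuousLinearMap.toLinearMap_sub, map_sub]

lemma divergence_const_smul (hV : DifferentiableAt ℝ V x) (c : ℝ) :
    divergence (c • V) x = c * divergence V x := by
  simp only [divergence, fderiv_const_smul hV, ContinuousLinearMap.toLinearMap_smul, map_smul,
    smul_eq_mul]

variable [FiniteDimensional ℝ E]

lemma divergence_smul (hf : DifferentiableAt ℝ f x) (hV : DifferentiableAt ℝ V x) :
    divergence (f • V) x = fderiv ℝ f x (V x) + f x * divergence V x := by
  simp only [divergence, fderiv_smul hf hV, ContinuousLinearMap.toLinearMap_add,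
    ContinuousLinearMap.toLinearMap_smul, map_add, map_smul, smul_eq_mul]
  rw [add_comm]
  congr 1
  exact LinearMap.trace_smulRight (fderiv ℝ f x : E →ₗ[ℝ] ℝ) (V x)

lemma divergence_sub_const (p : E) : divergence (fun y ↦ y - p) x = finrank ℝ E := by
  rw [divergence, fderiv_sub_const, fderiv_fun_id]
  exact LinearMap.trace_id ℝ E

lemma contDiffAt_gradient {m n : WithTop ℕ∞} (hu : ContDiffAt ℝ n u x) (hmn : m + 1 ≤ n) :
    ContDiffAt ℝ m (∇ u) x :=
  (toDual ℝ E).symm.contDiff.contDiffAt.comp x (hu.fderiv_right hmn)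

lemma inner_fderiv_gradient (hu : ContDiffAt ℝ 2 u x) (v w : E) :
    ⟪fderiv ℝ (∇ u) x v, w⟫ = fderiv ℝ (fderiv ℝ u) x v w := by
  have hDu : DifferentiableAt ℝ (fderiv ℝ u) x :=
    (hu.fderiv_right (m := 1) (by norm_num)).differentiableAt one_ne_zero
  have hgrad : fderiv ℝ (∇ u) x v = (toDual ℝ E).symm (fderiv ℝ (fderiv ℝ u) x v) := by
    have := ((toDual ℝ E).symm.toContinuousLinearEquiv.hasFDerivAt.comp x hDu.hasFDerivAt).fderiv
    exact congr($this v)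
  rw [hgrad, toDual_symm_apply]

lemma inner_fderiv_gradient_comm (hu : ContDiffAt ℝ 2 u x) (v w : E) :
    ⟪fderiv ℝ (∇ u) x v, w⟫ = ⟪fderiv ℝ (∇ u) x w, v⟫ := by
  rw [inner_fderiv_gradient hu, inner_fderiv_gradient hu]
  exact hu.isSymmSndFDerivAt (by simp) v w

lemma divergence_gradient (hu : ContDiffAt ℝ 2 u x) : divergence (∇ u) x = Δ u x := by
  let b := stdOrthonormalBasis ℝ E
  rw [divergence, LinearMap.trace_eq_sum_inner _ b,
    laplacian_eq_iteratedFDeriv_orthonormalBasis u b]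
  refine Finset.sum_congr rfl fun i _ ↦ ?_
  rw [real_inner_comm, ContinuousLinearMap.coe_coe, inner_fderiv_gradient hu,
    iteratedFDeriv_two_apply]
  rfl

/-- The Rellich field of `u` about `p`, quadratic in `∇u`; its divergence involves no second
derivatives of `u` other than `Δu`. The vector `x - p` generates the dilations about `p`. -/
noncomputable def rellichField (u : E → ℝ) (p x : E) : E :=
  (2 * ⟪x - p, ∇ u x⟫) • ∇ u x - ‖∇ u x‖ ^ 2 • (x - p)

lemma contDiffAt_rellichField (hu : ContDiffAt ℝ 2 u x) (p : E) :
    ContDiffAt ℝ 1 (rellichField u p) x := by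
  have hgrad : ContDiffAt ℝ 1 (∇ u) x := contDiffAt_gradient hu (by norm_num)
  have hX : ContDiffAt ℝ 1 (fun y ↦ y - p) x := contDiffAt_id.sub contDiffAt_const
  exact ((contDiffAt_const.mul (hX.inner ℝ hgrad)).smul hgrad).sub ((hgrad.norm_sq ℝ).smul hX)

lemma divergence_rellichField (hu : ContDiffAt ℝ 2 u x) (p : E) :
    divergence (rellichField u p) x =
      (2 - finrank ℝ E) * ‖∇ u x‖ ^ 2 + 2 * ⟪x - p, ∇ u x⟫ * Δ u x := by
  have hgrad : DifferentiableAt ℝ (∇ u) x :=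
    (contDiffAt_gradient (m := 1) hu (by norm_num)).differentiableAt one_ne_zero
  have hX : DifferentiableAt ℝ (fun y ↦ y - p) x := differentiableAt_id.sub_const p
  have hXu : DifferentiableAt ℝ (fun y ↦ 2 * ⟪y - p, ∇ u y⟫) x := (hX.inner ℝ hgrad).const_mul 2
  have hnorm : DifferentiableAt ℝ (fun y ↦ ‖∇ u y‖ ^ 2) x := hgrad.norm_sq ℝ
  have hDXu : fderiv ℝ (fun y ↦ 2 * ⟪y - p, ∇ u y⟫) x (∇ u x) =
      2 * (⟪x - p, fderiv ℝ (∇ u) x (∇ u x)⟫ + ‖∇ u x‖ ^ 2) := by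
    rw [fderiv_const_mul (hX.inner ℝ hgrad), smul_apply, fderiv_inner_apply ℝ hX hgrad,
      fderiv_sub_const, fderiv_fun_id, ContinuousLinearMap.id_apply, real_inner_self_eq_norm_sq,
      smul_eq_mul]
  have hDnorm : fderiv ℝ (fun y ↦ ‖∇ u y‖ ^ 2) x (x - p) =
      2 * ⟪∇ u x, fderiv ℝ (∇ u) x (x - p)⟫ := by
    rw [hgrad.hasFDerivAt.norm_sq.fderiv]
    simp
  have hsymm : ⟪x - p, fderiv ℝ (∇ u) x (∇ u x)⟫ = ⟪∇ u x, fderiv ℝ (∇ u) x (x - p)⟫ := by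
    rw [real_inner_comm, inner_fderiv_gradient_comm hu, real_inner_comm]
  have hfield : rellichField u p = (fun y : E ↦ 2 * ⟪y - p, ∇ u y⟫) • ∇ u -
      (fun y : E ↦ ‖∇ u y‖ ^ 2) • (fun y : E ↦ y - p) := rfl
  rw [hfield, divergence_sub (hXu.smul hgrad) (hnorm.smul hX), divergence_smul hXu hgrad,
    divergence_smul hnorm hX, hDXu, hDnorm, hsymm, divergence_gradient hu, divergence_sub_const]
  ring

/-- The vector field whose divergence yields the Rellich–Pohozaev identity for `-h²Δu = u`. -/
noncomputable def pohozaevField (h : ℝ) (u : E → ℝ) (p x : E) : E :=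
  h ^ 2 • rellichField u p x + u x ^ 2 • (x - p)

lemma contDiffAt_pohozaevField (hu : ContDiffAt ℝ 2 u x) (h : ℝ) (p : E) :
    ContDiffAt ℝ 1 (pohozaevField h u p) x :=
  ((contDiffAt_rellichField hu p).const_smul (h ^ 2)).add
    (((hu.of_le one_le_two).pow 2).smul (contDiffAt_id.sub contDiffAt_const))

lemma divergence_pohozaevField (hu : ContDiffAt ℝ 2 u x) (h : ℝ) (p : E) :
    divergence (pohozaevField h u p) x =
      h ^ 2 * ((2 - finrank ℝ E) * ‖∇ u x‖ ^ 2) + finrank ℝ E * u x ^ 2 +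
        2 * ⟪x - p, ∇ u x⟫ * (h ^ 2 * Δ u x + u x) := by
  have hR : DifferentiableAt ℝ (rellichField u p) x :=
    (contDiffAt_rellichField hu p).differentiableAt one_ne_zero
  have hu₁ : DifferentiableAt ℝ u x := hu.differentiableAt two_ne_zero
  have hsq : DifferentiableAt ℝ (fun y ↦ u y ^ 2) x := hu₁.fun_pow 2
  have hX : DifferentiableAt ℝ (fun y ↦ y - p) x := differentiableAt_id.sub_const p
  have hDu : fderiv ℝ (fun y ↦ u y ^ 2) x (x - p) = 2 * u x * ⟪x - p, ∇ u x⟫ := by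
    rw [fderiv_fun_pow 2 hu₁, real_inner_comm, inner_gradient_left]
    simp
  have hfield : pohozaevField h u p =
      (h ^ 2 • rellichField u p) + (fun y : E ↦ u y ^ 2) • (fun y : E ↦ y - p) := rfl
  rw [hfield, divergence_add (hR.const_smul _) (hsq.smul hX), divergence_const_smul hR,
    divergence_rellichField hu, divergence_smul hsq hX, hDu, divergence_sub_const]
  ring

end Divergence

section SegmentIntegral

variable {E : Type*} [NormedAddCommGroup E] [NormedSpace ℝ E] [MeasurableSpace E] [BorelSpace E]

lemma hausdorffMeasure_restrict_segment (x y : E) :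
    (μH[1] : Measure E).restrict (segment ℝ x y) =
      nndist x y • (volume.restrict (Set.Icc (0 : ℝ) 1)).map (AffineMap.lineMap x y) := by
  have hline : Measurable (AffineMap.lineMap x y : ℝ → E) := AffineMap.lineMap_continuous.measurable
  ext s hs
  rw [Measure.restrict_apply hs, Measure.smul_apply, Measure.map_apply hline hs,
    Measure.restrict_apply (hline hs), ← hausdorffMeasure_real, ← hausdorffMeasure_lineMap_image,
    Set.inter_comm (_ ⁻¹' _), Set.image_inter_preimage, ← segment_eq_image_lineMap, Set.inter_comm]

lemma setIntegral_segment (f : E → ℝ) (x y : E) :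
    ∫ w in segment ℝ x y, f w ∂μH[1] =
      dist x y * ∫ t in (0 : ℝ)..1, f (AffineMap.lineMap x y t) := by
  rw [hausdorffMeasure_restrict_segment, integral_smul_nnreal_measure]
  obtain rfl | hxy := eq_or_ne x y
  · simp
  have hline : MeasurableEmbedding (AffineMap.lineMap x y : ℝ → E) :=
    ((antilipschitzWith_lineMap (𝕜 := ℝ) hxy).isClosedEmbedding
      (lipschitzWith_lineMap x y).uniformContinuous).measurableEmbedding
  rw [hline.integral_map, integral_Icc_eq_integral_Ioc, intervalIntegral.integral_of_le zero_le_one,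
    NNReal.smul_def, coe_nndist, smul_eq_mul]

end SegmentIntegral

section StandardTriangle

open Set

/-- The closed triangle in `ℝ × ℝ` with vertices `(0, 0)`, `(1, 0)` and `(0, 1)`. -/
def stdTriangle : Set (ℝ × ℝ) := {q | 0 ≤ q.1 ∧ 0 ≤ q.2 ∧ q.1 + q.2 ≤ 1}

lemma isClosed_stdTriangle : IsClosed stdTriangle :=
  (isClosed_le continuous_const continuous_fst).inter <|
    (isClosed_le continuous_const continuous_snd).inter <|
      isClosed_le (continuous_fst.add continuous_snd) continuous_const

lemma isCompact_stdTriangle : IsCompact stdTriangle := by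
  refine (isCompact_Icc (a := ((0 : ℝ), (0 : ℝ))) (b := (1, 1))).of_isClosed_subset
    isClosed_stdTriangle ?_
  rintro ⟨s, t⟩ ⟨hs : 0 ≤ s, ht : 0 ≤ t, hst : s + t ≤ 1⟩
  exact ⟨⟨hs, ht⟩, ⟨show s ≤ 1 by linarith, show t ≤ 1 by linarith⟩⟩

lemma convex_stdTriangle : Convex ℝ stdTriangle :=
  (convex_halfSpace_ge (LinearMap.fst ℝ ℝ ℝ).isLinear 0).inter <|
    (convex_halfSpace_ge (LinearMap.snd ℝ ℝ ℝ).isLinear 0).inter <|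
      convex_halfSpace_le (LinearMap.fst ℝ ℝ ℝ + LinearMap.snd ℝ ℝ ℝ).isLinear 1

lemma mk_mem_stdTriangle_iff {s t : ℝ} :
    (s, t) ∈ stdTriangle ↔ s ∈ Icc 0 1 ∧ t ∈ Icc 0 (1 - s) := by
  simp only [stdTriangle, mem_ofPred_eq, mem_Icc]
  grind

lemma swap_mem_stdTriangle_iff {q : ℝ × ℝ} : q.swap ∈ stdTriangle ↔ q ∈ stdTriangle := by
  simp only [stdTriangle, mem_ofPred_eq, Prod.fst_swap, Prod.snd_swap]
  grind

lemma integrableOn_stdTriangle {f : ℝ × ℝ → ℝ} (hf : ContinuousOn f stdTriangle) :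
    IntegrableOn f stdTriangle :=
  hf.integrableOn_compact isCompact_stdTriangle

lemma setIntegral_stdTriangle {f : ℝ × ℝ → ℝ} (hf : ContinuousOn f stdTriangle) :
    ∫ q in stdTriangle, f q = ∫ s in (0 : ℝ)..1, ∫ t in (0 : ℝ)..(1 - s), f (s, t) := by
  have hmeas : MeasurableSet stdTriangle := isClosed_stdTriangle.measurableSet
  have hint : Integrable (stdTriangle.indicator f) :=
    (integrable_indicator_iff hmeas).2 (integrableOn_stdTriangle hf)
  have hslice (s : ℝ) : ∫ t, stdTriangle.indicator f (s, t) =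
      (Icc 0 1).indicator (fun s ↦ ∫ t in (0 : ℝ)..(1 - s), f (s, t)) s := by
    by_cases hs : s ∈ Icc (0 : ℝ) 1
    · have hind : (fun t ↦ stdTriangle.indicator f (s, t)) =
          (Icc 0 (1 - s)).indicator fun t ↦ f (s, t) := by
        ext t
        simp only [indicator, mk_mem_stdTriangle_iff, hs, true_and]
      rw [indicator_of_mem hs, hind, integral_indicator measurableSet_Icc,
        integral_Icc_eq_integral_Ioc, intervalIntegral.integral_of_le (sub_nonneg.2 hs.2)]
    · simp only [indicator, mk_mem_stdTriangle_iff, hs, false_and, if_false, integral_zero]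
  rw [← integral_indicator hmeas, Measure.volume_eq_prod,
    integral_prod _ (by rwa [← Measure.volume_eq_prod]),
    intervalIntegral.integral_of_le zero_le_one, ← integral_Icc_eq_integral_Ioc,
    ← integral_indicator measurableSet_Icc]
  exact integral_congr_ae (.of_forall hslice)

lemma setIntegral_stdTriangle_comp_swap (f : ℝ × ℝ → ℝ) :
    ∫ q in stdTriangle, f q.swap = ∫ q in stdTriangle, f q := by
  have hpre : Prod.swap ⁻¹' stdTriangle = stdTriangle := ext fun _ ↦ swap_mem_stdTriangle_iff
  have hswap : MeasurePreserving (Prod.swap : ℝ × ℝ → ℝ × ℝ) volume volume :=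
    Measure.measurePreserving_swap
  simpa only [hpre] using hswap.setIntegral_preimage_emb
    MeasurableEquiv.prodComm.measurableEmbedding f stdTriangle

lemma setIntegral_stdTriangle_deriv_snd {g g' : ℝ × ℝ → ℝ} (hg' : ContinuousOn g' stdTriangle)
    (hderiv : ∀ q ∈ stdTriangle, HasDerivAt (fun t ↦ g (q.1, t)) (g' q) q.2) :
    ∫ q in stdTriangle, g' q = ∫ s in (0 : ℝ)..1, (g (s, 1 - s) - g (s, 0)) := by
  rw [setIntegral_stdTriangle hg']
  refine intervalIntegral.integral_congr fun s hs ↦ ?_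
  rw [uIcc_of_le zero_le_one] at hs
  have hle : 0 ≤ 1 - s := sub_nonneg.2 hs.2
  have hmem : MapsTo (fun t ↦ (s, t)) (uIcc 0 (1 - s)) stdTriangle := fun t ht ↦
    mk_mem_stdTriangle_iff.2 ⟨hs, by rwa [uIcc_of_le hle] at ht⟩
  exact intervalIntegral.integral_eq_sub_of_hasDerivAt (f := fun t ↦ g (s, t))
    (fun t ht ↦ hderiv (s, t) (hmem ht))
    (hg'.comp (by fun_prop) hmem).intervalIntegrable

end StandardTriangle

section SignedArea

open Module

attribute [local instance] FiniteDimensional.of_fact_finrank_eq_two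

variable {E : Type*} [NormedAddCommGroup E] [InnerProductSpace ℝ E]

/-- `ν` is the outward unit normal to the side `[x, y]` of the triangle with vertices `x`, `y`
and `z`. -/
structure IsOutwardNormal (x y z ν : E) : Prop where
  norm_eq_one : ‖ν‖ = 1
  inner_side_eq_zero : ⟪x - y, ν⟫ = 0
  inner_neg : ⟪z - x, ν⟫ < 0

lemma IsOutwardNormal.ne {x y z ν : E} (hν : IsOutwardNormal x y z ν) : z ≠ x := by
  rintro rfl
  simpa using hν.inner_neg

lemma IsOutwardNormal.inner_normal_side {x y z ν : E} (hν : IsOutwardNormal x y z ν) :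
    ⟪ν, y - x⟫ = 0 := by
  rw [← neg_sub, inner_neg_right, real_inner_comm, hν.inner_side_eq_zero, neg_zero]

lemma volume_eq_smul_map_sum_smul {n : ℕ} [Fact (finrank ℝ E = n)] [FiniteDimensional ℝ E]
    [MeasurableSpace E] [BorelSpace E] (o : Orientation ℝ E (Fin n)) (b : Basis (Fin n) ℝ E) :
    (volume : Measure E) =
      ENNReal.ofReal |o.volumeForm b| • volume.map fun c : Fin n → ℝ ↦ ∑ i, c i • b i := by
  have hsum : (fun c : Fin n → ℝ ↦ ∑ i, c i • b i) = b.equivFunL.symm :=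
    funext fun c ↦ (b.equivFun_symm_apply c).symm
  have hcoord : volume.map b.equivFunL.symm = b.addHaar := by
    rw [← addHaarMeasure_eq_volume_pi, ← Basis.parallelepiped_basisFun, ← Basis.addHaar_def,
      Basis.map_addHaar]
    congr 1
    ext i
    simp [← hsum, Pi.single_apply]
  have hpar : (volume : Measure E) b.parallelepiped = ENNReal.ofReal |o.volumeForm b| := by
    rw [← o.measure_eq_volume, b.coe_parallelepiped, AlternatingMap.measure_parallelepiped]
  rw [hsum, hcoord, ← hpar, Basis.addHaar_def, ← Measure.addHaarMeasure_unique]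

variable [Fact (finrank ℝ E = 2)] (o : Orientation ℝ E (Fin 2))

lemma linearIndependent_of_areaForm_ne_zero {a b : E} (hab : o.areaForm a b ≠ 0) :
    LinearIndependent ℝ ![a, b] := by
  rw [o.areaForm_to_volumeForm] at hab
  exact not_imp_comm.1 (o.volumeForm.map_linearDependent _) hab

lemma areaForm_map_add_areaForm_map (L : E →ₗ[ℝ] E) (a b : E) :
    o.areaForm (L a) b + o.areaForm a (L b) = LinearMap.trace ℝ E L * o.areaForm a b := by
  let e : Basis (Fin 2) ℝ E := finBasisOfFinrankEq ℝ E Fact.out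
  suffices (o.areaForm ∘ₗ L) + (o.areaForm.compl₂ L) = LinearMap.trace ℝ E L • o.areaForm by
    simpa using congr($this a b)
  refine LinearMap.ext_basis e e fun i j ↦ ?_
  have hL (i) : L (e i) =
      LinearMap.toMatrix e e L 0 i • e 0 + LinearMap.toMatrix e e L 1 i • e 1 := by
    rw [← Fin.sum_univ_two fun k ↦ LinearMap.toMatrix e e L k i • e k]
    simp only [LinearMap.toMatrix_apply, e.sum_repr]
  have hswap := o.areaForm_swap (e 1) (e 0)
  rw [LinearMap.trace_eq_matrix_trace ℝ e, Matrix.trace_fin_two]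
  fin_cases i <;> fin_cases j <;>
    simp only [Fin.zero_eta, Fin.mk_one, LinearMap.add_apply, LinearMap.coe_comp,
      Function.comp_apply, LinearMap.compl₂_apply, hL, map_add, map_smul, LinearMap.smul_apply,
      o.areaForm_apply_self, smul_eq_mul] <;> grind

namespace IsOutwardNormal

variable {o} {x y z ν : E}

lemma areaForm_eq_inner_mul (hν : IsOutwardNormal x y z ν) (v : E) :
    o.areaForm v (y - x) = ⟪v, ν⟫ * o.areaForm ν (y - x) := by
  have := o.inner_mul_areaForm_sub ν v (y - x)
  rw [hν.inner_normal_side, hν.norm_eq_one, real_inner_comm] at this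
  linarith

lemma abs_areaForm (hν : IsOutwardNormal x y z ν) : |o.areaForm ν (y - x)| = dist x y := by
  rw [o.abs_areaForm_of_orthogonal hν.inner_normal_side, hν.norm_eq_one, one_mul, dist_eq_norm_sub']

lemma areaForm_eq_dist_mul_inner (hν : IsOutwardNormal x y z ν)
    (hpos : 0 < o.areaForm (y - x) (z - x)) (v : E) :
    o.areaForm v (y - x) = dist x y * ⟪v, ν⟫ := by
  have hsign : 0 < o.areaForm ν (y - x) := by
    rw [o.areaForm_swap, hν.areaForm_eq_inner_mul, neg_pos] at hpos
    exact pos_of_mul_neg_right hpos hν.inner_neg.le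
  rw [hν.areaForm_eq_inner_mul, ← hν.abs_areaForm (o := o), abs_of_pos hsign, mul_comm]

lemma exists_areaForm_pos (hν : IsOutwardNormal x y z ν) (hxy : x ≠ y) :
    ∃ o : Orientation ℝ E (Fin 2), 0 < o.areaForm (y - x) (z - x) := by
  let o : Orientation ℝ E (Fin 2) := (finBasisOfFinrankEq ℝ E Fact.out).orientation
  have hne : o.areaForm (y - x) (z - x) ≠ 0 := by
    rw [o.areaForm_swap, hν.areaForm_eq_inner_mul, neg_ne_zero]
    refine mul_ne_zero hν.inner_neg.ne (abs_ne_zero.1 ?_)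
    rwa [hν.abs_areaForm, dist_ne_zero]
  rcases hne.lt_or_gt with hneg | hpos
  · refine ⟨-o, ?_⟩
    simpa [o.areaForm_neg_orientation] using hneg
  · exact ⟨o, hpos⟩

end IsOutwardNormal

end SignedArea

section TriangleDivergence

open Module Set

attribute [local instance] FiniteDimensional.of_fact_finrank_eq_two

section TriangleMap

variable {E : Type*} [AddCommGroup E] [Module ℝ E]

/-- The affine map from `ℝ × ℝ` sending the standard triangle onto the triangle `xyz`. -/
def triangleMap (x y z : E) (q : ℝ × ℝ) : E := x + (q.1 • (y - x) + q.2 • (z - x))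

lemma image_triangleMap_stdTriangle (x y z : E) :
    triangleMap x y z '' stdTriangle = convexHull ℝ {x, y, z} := by
  apply Subset.antisymm
  · rintro _ ⟨⟨s, t⟩, ⟨hs : 0 ≤ s, ht : 0 ≤ t, hst : s + t ≤ 1⟩, rfl⟩
    have hcomb : triangleMap x y z (s, t) = ∑ i, ![1 - s - t, s, t] i • ![x, y, z] i := by
      simp only [triangleMap, Fin.sum_univ_three, Matrix.cons_val]
      module
    rw [hcomb]
    refine (convex_convexHull ℝ _).sum_mem (fun i _ ↦ ?_) ?_ fun i _ ↦ subset_convexHull ℝ _ ?_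
    · fin_cases i <;> simp <;> linarith
    · simp only [Fin.sum_univ_three, Matrix.cons_val]
      ring
    · fin_cases i <;> simp
  · refine convexHull_min ?_ ?_
    · rintro _ (rfl | rfl | rfl)
      · exact ⟨(0, 0), by norm_num [stdTriangle], by simp [triangleMap]⟩
      · exact ⟨(1, 0), by norm_num [stdTriangle], by simp [triangleMap]⟩
      · exact ⟨(0, 1), by norm_num [stdTriangle], by simp [triangleMap]⟩
    · rintro _ ⟨q, hq, rfl⟩ _ ⟨r, hr, rfl⟩ α β hα hβ hαβ
      refine ⟨α • q + β • r, convex_stdTriangle hq hr hα hβ hαβ, ?_⟩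
      obtain rfl : α = 1 - β := eq_sub_of_add_eq hαβ
      simp only [triangleMap, Prod.fst_add, Prod.snd_add, Prod.smul_fst, Prod.smul_snd,
        smul_eq_mul]
      module

lemma triangleMap_mk_zero (x y z : E) (s : ℝ) :
    triangleMap x y z (s, 0) = AffineMap.lineMap x y s := by
  simp only [triangleMap, AffineMap.lineMap_apply_module]
  module

lemma triangleMap_mk_one_sub (x y z : E) (s : ℝ) :
    triangleMap x y z (s, 1 - s) = AffineMap.lineMap z y s := by
  simp only [triangleMap, AffineMap.lineMap_apply_module]
  module

lemma triangleMap_swap (x y z : E) (q : ℝ × ℝ) :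
    triangleMap x y z q.swap = triangleMap x z y q := by
  simp only [triangleMap, Prod.fst_swap, Prod.snd_swap, add_comm]

lemma injective_triangleMap {x y z : E} (hli : LinearIndependent ℝ ![y - x, z - x]) :
    Function.Injective (triangleMap x y z) := by
  intro q r hqr
  have hzero : (q.1 - r.1) • (y - x) + (q.2 - r.2) • (z - x) = 0 := by
    rw [← sub_eq_zero.2 hqr, triangleMap, triangleMap]
    module
  obtain ⟨hfst, hsnd⟩ := LinearIndependent.pair_iff.1 hli _ _ hzero
  exact Prod.ext (sub_eq_zero.1 hfst) (sub_eq_zero.1 hsnd)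

end TriangleMap

section ParametricIntegrals

variable {E : Type*} [NormedAddCommGroup E] [NormedSpace ℝ E] {g : E → ℝ} {x y z : E}

lemma continuous_triangleMap : Continuous (triangleMap x y z) := by
  unfold triangleMap
  fun_prop

lemma triangleMap_mem_convexHull {q : ℝ × ℝ} (hq : q ∈ stdTriangle) :
    triangleMap x y z q ∈ convexHull ℝ {x, y, z} :=
  image_triangleMap_stdTriangle x y z ▸ mem_image_of_mem _ hq

lemma integral_lineMap_comm (g : E → ℝ) (x y : E) :
    ∫ t in (0 : ℝ)..1, g (AffineMap.lineMap y x t) =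
      ∫ t in (0 : ℝ)..1, g (AffineMap.lineMap x y t) := by
  simpa only [sub_self, sub_zero, AffineMap.lineMap_apply_one_sub] using
    intervalIntegral.integral_comp_sub_left (a := 0) (b := 1)
      (fun t ↦ g (AffineMap.lineMap x y t)) 1

lemma intervalIntegrable_comp_lineMap (hg : ContinuousOn g (segment ℝ x y)) :
    IntervalIntegrable (fun t ↦ g (AffineMap.lineMap x y t)) volume 0 1 := by
  refine (hg.comp AffineMap.lineMap_continuous.continuousOn fun t ht ↦ ?_).intervalIntegrable
  rw [uIcc_of_le zero_le_one] at ht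
  exact segment_eq_image_lineMap ℝ x y ▸ mem_image_of_mem _ ht

lemma continuousOn_fderiv_triangleMap (hg : ∀ w ∈ convexHull ℝ {x, y, z}, ContDiffAt ℝ 1 g w)
    (v : E) : ContinuousOn (fun q ↦ fderiv ℝ g (triangleMap x y z q) v) stdTriangle := by
  intro q hq
  have hfderiv : ContinuousAt (fderiv ℝ g) (triangleMap x y z q) :=
    ((hg _ (triangleMap_mem_convexHull hq)).fderiv_right (m := 0) (by norm_num)).continuousAt
  exact ((hfderiv.comp continuous_triangleMap.continuousAt).clm_apply
    continuousAt_const).continuousWithinAt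

lemma setIntegral_stdTriangle_fderiv_right
    (hg : ∀ w ∈ convexHull ℝ {x, y, z}, ContDiffAt ℝ 1 g w) :
    ∫ q in stdTriangle, fderiv ℝ g (triangleMap x y z q) (z - x) =
      (∫ t in (0 : ℝ)..1, g (AffineMap.lineMap y z t)) -
        ∫ t in (0 : ℝ)..1, g (AffineMap.lineMap x y t) := by
  have hderiv : ∀ q ∈ stdTriangle, HasDerivAt (fun t ↦ g (triangleMap x y z (q.1, t)))
      (fderiv ℝ g (triangleMap x y z q) (z - x)) q.2 := fun q hq ↦ by
    have hline : HasDerivAt (fun t ↦ triangleMap x y z (q.1, t)) (z - x) q.2 := by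
      simpa [triangleMap] using
        (((hasDerivAt_id q.2).smul_const (z - x)).const_add (q.1 • (y - x))).const_add x
    exact ((hg _ (triangleMap_mem_convexHull hq)).differentiableAt
      one_ne_zero).hasFDerivAt.comp_hasDerivAt q.2 hline
  have hside {v w : E} (hv : v ∈ ({x, y, z} : Set E)) (hw : w ∈ ({x, y, z} : Set E)) :
      IntervalIntegrable (fun t ↦ g (AffineMap.lineMap v w t)) volume 0 1 :=
    intervalIntegrable_comp_lineMap fun p hp ↦
      (hg p (segment_subset_convexHull hv hw hp)).continuousAt.continuousWithinAt
  rw [setIntegral_stdTriangle_deriv_snd (g := fun q ↦ g (triangleMap x y z q))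
    (continuousOn_fderiv_triangleMap hg _) hderiv]
  simp only [triangleMap_mk_zero, triangleMap_mk_one_sub]
  rw [intervalIntegral.integral_sub (hside (by simp) (by simp)) (hside (by simp) (by simp)),
    integral_lineMap_comm]

lemma setIntegral_stdTriangle_fderiv_left
    (hg : ∀ w ∈ convexHull ℝ {x, y, z}, ContDiffAt ℝ 1 g w) :
    ∫ q in stdTriangle, fderiv ℝ g (triangleMap x y z q) (y - x) =
      (∫ t in (0 : ℝ)..1, g (AffineMap.lineMap y z t)) -
        ∫ t in (0 : ℝ)..1, g (AffineMap.lineMap x z t) := by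
  rw [← setIntegral_stdTriangle_comp_swap]
  simp only [triangleMap_swap]
  rw [setIntegral_stdTriangle_fderiv_right (by rwa [pair_comm z y]), integral_lineMap_comm]

end ParametricIntegrals

variable {E : Type*} [NormedAddCommGroup E] [InnerProductSpace ℝ E] [Fact (finrank ℝ E = 2)]
  {o : Orientation ℝ E (Fin 2)} {V : E → E} {x y z : E}

lemma volume_eq_smul_map_triangleMap [MeasurableSpace E] [BorelSpace E]
    (hpos : 0 < o.areaForm (y - x) (z - x)) :
    (volume : Measure E) =
      ENNReal.ofReal (o.areaForm (y - x) (z - x)) • volume.map (triangleMap x y z) := by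
  have hli : LinearIndependent ℝ ![y - x, z - x] :=
    linearIndependent_of_areaForm_ne_zero o hpos.ne'
  let b : Basis (Fin 2) ℝ E :=
    basisOfLinearIndependentOfCardEqFinrank hli (by simp [Fact.out (p := finrank ℝ E = 2)])
  have hb : ⇑b = ![y - x, z - x] := coe_basisOfLinearIndependentOfCardEqFinrank hli _
  have hmap : triangleMap x y z = (fun v ↦ x + v) ∘ (fun c : Fin 2 → ℝ ↦ ∑ i, c i • b i) ∘
      MeasurableEquiv.finTwoArrow.symm := by
    ext q
    simp [triangleMap, hb]
  have hflat : volume.map (triangleMap x y z) =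
      ((volume.map fun c : Fin 2 → ℝ ↦ ∑ i, c i • b i)).map (x + ·) := by
    rw [hmap, ← Measure.map_map (by fun_prop) (by fun_prop), ← Measure.map_map (by fun_prop)
      (MeasurableEquiv.measurable _), ((volume_preserving_finTwoArrow ℝ).symm).map_eq]
  rw [hflat, ← Measure.map_smul, ← abs_of_pos hpos, o.areaForm_to_volumeForm, ← hb,
    ← volume_eq_smul_map_sum_smul, map_add_left_eq_self]

lemma setIntegral_triangle [MeasurableSpace E] [BorelSpace E]
    (hpos : 0 < o.areaForm (y - x) (z - x)) (f : E → ℝ) :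
    ∫ w in convexHull ℝ {x, y, z}, f w =
      o.areaForm (y - x) (z - x) * ∫ q in stdTriangle, f (triangleMap x y z q) := by
  have hemb : MeasurableEmbedding (triangleMap x y z) :=
    continuous_triangleMap.measurableEmbedding <|
      injective_triangleMap (linearIndependent_of_areaForm_ne_zero o hpos.ne')
  rw [volume_eq_smul_map_triangleMap hpos, Measure.restrict_smul, integral_smul_measure,
    hemb.setIntegral_map, ← image_triangleMap_stdTriangle, preimage_image_eq _ hemb.injective,
    ENNReal.toReal_ofReal hpos.le, smul_eq_mul]

/-- The flux of `V` across `[x, y]`, through the right-hand side of the segment traversed from `x`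
to `y`, written with the area form of `o` in place of a normal vector. -/
noncomputable def segmentFlux (o : Orientation ℝ E (Fin 2)) (V : E → E) (x y : E) : ℝ :=
  ∫ t in (0 : ℝ)..1, o.areaForm (V (AffineMap.lineMap x y t)) (y - x)

lemma segmentFlux_swap (o : Orientation ℝ E (Fin 2)) (V : E → E) (x y : E) :
    segmentFlux o V y x = -segmentFlux o V x y := by
  rw [segmentFlux, segmentFlux, integral_lineMap_comm (fun w ↦ o.areaForm (V w) (x - y)),
    ← intervalIntegral.integral_neg]
  simp only [← map_neg, neg_sub]

lemma contDiffAt_areaForm_left {w : E} (hV : ContDiffAt ℝ 1 V w) (c : E) :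
    ContDiffAt ℝ 1 (fun w ↦ o.areaForm (V w) c) w :=
  (o.areaForm'.flip c).contDiff.contDiffAt.comp w hV

lemma fderiv_areaForm_left {w : E} (hV : DifferentiableAt ℝ V w) (c v : E) :
    fderiv ℝ (fun w ↦ o.areaForm (V w) c) w v = o.areaForm (fderiv ℝ V w v) c :=
  congr($(((o.areaForm'.flip c).hasFDerivAt.comp w hV.hasFDerivAt).fderiv) v)

lemma areaForm_mul_setIntegral_divergence
    (hV : ∀ w ∈ convexHull ℝ {x, y, z}, ContDiffAt ℝ 1 V w) :
    o.areaForm (y - x) (z - x) * ∫ q in stdTriangle, divergence V (triangleMap x y z q) =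
      segmentFlux o V x y + segmentFlux o V y z + segmentFlux o V z x := by
  let g (c w : E) : ℝ := o.areaForm (V w) c
  have hg (c : E) : ∀ w ∈ convexHull ℝ {x, y, z}, ContDiffAt ℝ 1 (g c) w := fun w hw ↦
    contDiffAt_areaForm_left (hV w hw) c
  have hint (c v : E) :
      IntegrableOn (fun q ↦ fderiv ℝ (g c) (triangleMap x y z q) v) stdTriangle :=
    integrableOn_stdTriangle (continuousOn_fderiv_triangleMap (hg c) v)
  have hdiv : ∀ q ∈ stdTriangle,
      o.areaForm (y - x) (z - x) * divergence V (triangleMap x y z q) =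
        fderiv ℝ (g (z - x)) (triangleMap x y z q) (y - x) -
          fderiv ℝ (g (y - x)) (triangleMap x y z q) (z - x) := fun q hq ↦ by
    have hdiff := (hV _ (triangleMap_mem_convexHull hq)).differentiableAt one_ne_zero
    rw [fderiv_areaForm_left hdiff, fderiv_areaForm_left hdiff, divergence, mul_comm,
      ← areaForm_map_add_areaForm_map, o.areaForm_swap (y - x), sub_eq_add_neg]
    rfl
  have hthird : segmentFlux o V y z = (∫ t in (0 : ℝ)..1, g (z - x) (AffineMap.lineMap y z t)) -
      ∫ t in (0 : ℝ)..1, g (y - x) (AffineMap.lineMap y z t) := by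
    have hside (c : E) : IntervalIntegrable (fun t ↦ g c (AffineMap.lineMap y z t)) volume 0 1 :=
      intervalIntegrable_comp_lineMap fun w hw ↦ (hg c w <| segment_subset_convexHull
        (by simp) (by simp) hw).continuousAt.continuousWithinAt
    rw [← intervalIntegral.integral_sub (hside _) (hside _)]
    simp only [segmentFlux, g, ← map_sub, sub_sub_sub_cancel_right]
  rw [← integral_const_mul, setIntegral_congr_fun isClosed_stdTriangle.measurableSet hdiv,
    integral_sub (hint _ _) (hint _ _), setIntegral_stdTriangle_fderiv_left (hg _),
    setIntegral_stdTriangle_fderiv_right (hg _), segmentFlux_swap o V x z, hthird]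
  simp only [segmentFlux, g]
  ring

lemma segmentFlux_eq_setIntegral_inner [MeasurableSpace E] [BorelSpace E] {ν : E}
    (hν : IsOutwardNormal x y z ν) (hpos : 0 < o.areaForm (y - x) (z - x)) (V : E → E) :
    segmentFlux o V x y = ∫ w in segment ℝ x y, ⟪V w, ν⟫ ∂μH[1] := by
  simp only [segmentFlux, hν.areaForm_eq_dist_mul_inner hpos, intervalIntegral.integral_const_mul,
    setIntegral_segment]

lemma areaForm_sub_sub_cycle (o : Orientation ℝ E (Fin 2)) (x y z : E) :
    o.areaForm (z - y) (x - y) = o.areaForm (y - x) (z - x) := by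
  simp only [map_sub, LinearMap.sub_apply, o.areaForm_apply_self]
  linarith [o.areaForm_swap z x, o.areaForm_swap z y]

theorem setIntegral_divergence_triangle [MeasurableSpace E] [BorelSpace E] {νxy νyz νzx : E}
    (hxy : IsOutwardNormal x y z νxy) (hyz : IsOutwardNormal y z x νyz)
    (hzx : IsOutwardNormal z x y νzx) (hV : ∀ w ∈ convexHull ℝ {x, y, z}, ContDiffAt ℝ 1 V w) :
    ∫ w in convexHull ℝ {x, y, z}, divergence V w =
      (∫ w in segment ℝ x y, ⟪V w, νxy⟫ ∂μH[1]) + (∫ w in segment ℝ y z, ⟪V w, νyz⟫ ∂μH[1]) +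
        ∫ w in segment ℝ z x, ⟪V w, νzx⟫ ∂μH[1] := by
  obtain ⟨o, hpos⟩ := hxy.exists_areaForm_pos hyz.ne
  have hpos' : 0 < o.areaForm (z - y) (x - y) := areaForm_sub_sub_cycle o x y z ▸ hpos
  have hpos'' : 0 < o.areaForm (x - z) (y - z) := areaForm_sub_sub_cycle o y z x ▸ hpos'
  rw [setIntegral_triangle hpos, areaForm_mul_setIntegral_divergence hV,
    segmentFlux_eq_setIntegral_inner hxy hpos, segmentFlux_eq_setIntegral_inner hyz hpos',
    segmentFlux_eq_setIntegral_inner hzx hpos'']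

end TriangleDivergence

section DirichletEigenfunction

open Module Set
open scoped Gradient Laplacian

attribute [local instance] FiniteDimensional.of_fact_finrank_eq_two

lemma fderiv_apply_sub_eq_zero_of_eqOn_segment {E : Type*} [NormedAddCommGroup E]
    [NormedSpace ℝ E] {u : E → ℝ} {x y w : E} (hw : w ∈ segment ℝ x y)
    (hu : DifferentiableAt ℝ u w) (hzero : ∀ v ∈ segment ℝ x y, u v = 0) :
    fderiv ℝ u w (y - x) = 0 := by
  rw [segment_eq_image_lineMap] at hw hzero
  obtain ⟨t, ht, rfl⟩ := hw
  have hcomp : HasDerivWithinAt (fun s ↦ u (AffineMap.lineMap x y s))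
      (fderiv ℝ u (AffineMap.lineMap x y t) (y - x)) (Icc 0 1) t :=
    (hu.hasFDerivAt.comp_hasDerivAt t AffineMap.hasDerivAt_lineMap).hasDerivWithinAt
  have hconst : HasDerivWithinAt (fun s ↦ u (AffineMap.lineMap x y s)) 0 (Icc 0 1) t :=
    (hasDerivWithinAt_const t _ 0).congr (fun s hs ↦ hzero _ (mem_image_of_mem _ hs))
      (hzero _ (mem_image_of_mem _ ht))
  exact (uniqueDiffOn_Icc one_pos t ht).eq_deriv _ hcomp hconst

lemma mem_frontier_of_inner_le {E : Type*} [NormedAddCommGroup E] [InnerProductSpace ℝ E]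
    {S : Set E} {w ν : E} (hw : w ∈ S) (hν : ν ≠ 0) (hle : ∀ v ∈ S, ⟪v, ν⟫ ≤ ⟪w, ν⟫) :
    w ∈ frontier S := by
  refine ⟨subset_closure hw, fun hint ↦ hν ?_⟩
  have hmax : IsLocalMax (innerSL ℝ ν) w := by
    filter_upwards [mem_interior_iff_mem_nhds.1 hint] with v hv
    simpa only [innerSL_apply_apply, real_inner_comm] using hle v hv
  have hzero := hmax.fderiv_eq_zero
  rw [ContinuousLinearMap.fderiv] at hzero
  simpa using congr($hzero ν)

lemma inner_pohozaevField_of_gradient_eq_smul {E : Type*} [NormedAddCommGroup E]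
    [InnerProductSpace ℝ E] [FiniteDimensional ℝ E] {u : E → ℝ} {w ν : E} (hu : u w = 0)
    (hν : ‖ν‖ = 1) (hgrad : ∇ u w = ⟪∇ u w, ν⟫ • ν) (h : ℝ) (p : E) :
    ⟪pohozaevField h u p w, ν⟫ = ⟪w - p, ν⟫ * (h * ⟪∇ u w, ν⟫) ^ 2 := by
  rw [pohozaevField, rellichField, hu]
  generalize ⟪∇ u w, ν⟫ = d at hgrad ⊢
  rw [hgrad]
  simp only [inner_add_left, inner_sub_left, real_inner_smul_left, real_inner_smul_right,
    real_inner_self_eq_norm_sq, norm_smul, hν, Real.norm_eq_abs, mul_pow, sq_abs]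
  ring

variable {E : Type*} [NormedAddCommGroup E] [InnerProductSpace ℝ E] {x y z ν w : E}

lemma IsOutwardNormal.inner_eq_of_mem_segment (hν : IsOutwardNormal x y z ν)
    (hw : w ∈ segment ℝ x y) : ⟪w, ν⟫ = ⟪x, ν⟫ := by
  obtain ⟨t, -, rfl⟩ := segment_eq_image' ℝ x y ▸ hw
  rw [inner_add_left, real_inner_smul_left, real_inner_comm ν (y - x), hν.inner_normal_side,
    mul_zero, add_zero]

lemma IsOutwardNormal.inner_sub_eq_zero (hν : IsOutwardNormal x y z ν) {v : E}
    (hw : w ∈ segment ℝ x y) (hv : v ∈ segment ℝ x y) : ⟪w - v, ν⟫ = 0 := by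
  rw [inner_sub_left, hν.inner_eq_of_mem_segment hw, hν.inner_eq_of_mem_segment hv, sub_self]

lemma IsOutwardNormal.inner_le_of_mem_convexHull (hν : IsOutwardNormal x y z ν)
    (hw : w ∈ convexHull ℝ {x, y, z}) : ⟪w, ν⟫ ≤ ⟪x, ν⟫ := by
  have hconvex : Convex ℝ {v : E | ⟪v, ν⟫ ≤ ⟪x, ν⟫} :=
    convex_halfSpace_le (((innerₗ E).flip ν).isLinear) _
  refine convexHull_min ?_ hconvex hw
  rintro v (rfl | rfl | rfl)
  · exact le_refl ⟪v, ν⟫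
  · exact (hν.inner_eq_of_mem_segment (right_mem_segment ℝ x v)).le
  · rw [mem_ofPred, ← sub_nonpos, ← inner_sub_left]
    exact hν.inner_neg.le

lemma IsOutwardNormal.segment_subset_frontier (hν : IsOutwardNormal x y z ν) :
    segment ℝ x y ⊆ frontier (convexHull ℝ {x, y, z}) := fun w hw ↦
  mem_frontier_of_inner_le (segment_subset_convexHull (by simp) (by simp) hw)
    (norm_ne_zero_iff.1 (hν.norm_eq_one ▸ one_ne_zero))
    fun v hv ↦ by rw [hν.inner_eq_of_mem_segment hw]; exact hν.inner_le_of_mem_convexHull hv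

lemma IsOutwardNormal.eq_inner_smul_of_inner_side_eq_zero [Fact (finrank ℝ E = 2)]
    (hν : IsOutwardNormal x y z ν) (hxy : x ≠ y) {g : E} (hg : ⟪g, y - x⟫ = 0) :
    g = ⟪g, ν⟫ • ν := by
  let o : Orientation ℝ E (Fin 2) := (finBasisOfFinrankEq ℝ E Fact.out).orientation
  have hinner : ⟪g - ⟪g, ν⟫ • ν, y - x⟫ = 0 := by
    rw [inner_sub_left, real_inner_smul_left, hν.inner_normal_side, hg, mul_zero, sub_zero]
  have harea : o.areaForm (g - ⟪g, ν⟫ • ν) (y - x) = 0 := by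
    rw [LinearMap.map_sub₂, LinearMap.map_smul₂, hν.areaForm_eq_inner_mul, smul_eq_mul, sub_self]
  have hnorm := o.inner_sq_add_areaForm_sq (g - ⟪g, ν⟫ • ν) (y - x)
  rw [hinner, harea, zero_pow two_ne_zero, add_zero, eq_comm, mul_eq_zero,
    sq_eq_zero_iff, sq_eq_zero_iff, norm_eq_zero, norm_eq_zero, sub_eq_zero, sub_eq_zero] at hnorm
  exact hnorm.resolve_right hxy.symm

/-- `u` is a Dirichlet eigenfunction of `-h²Δ` on `T` with eigenvalue `1`, of class `C²` up to the
boundary. -/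
structure IsDirichletEigenfunction [FiniteDimensional ℝ E] (h : ℝ) (u : E → ℝ) (T : Set E) :
    Prop where
  contDiffAt : ∀ x ∈ T, ContDiffAt ℝ 2 u x
  neg_sq_mul_laplacian : ∀ x ∈ T, -h ^ 2 * Δ u x = u x
  eq_zero_of_mem_frontier : ∀ x ∈ frontier T, u x = 0

variable [Fact (finrank ℝ E = 2)]

namespace IsDirichletEigenfunction

variable {h : ℝ} {u : E → ℝ}

lemma gradient_eq_inner_smul (hu : IsDirichletEigenfunction h u (convexHull ℝ {x, y, z}))
    (hν : IsOutwardNormal x y z ν) (hxy : x ≠ y) (hw : w ∈ segment ℝ x y) :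
    ∇ u w = ⟪∇ u w, ν⟫ • ν := by
  refine hν.eq_inner_smul_of_inner_side_eq_zero hxy ?_
  rw [inner_gradient_left]
  refine fderiv_apply_sub_eq_zero_of_eqOn_segment hw ?_ fun v hv ↦
    hu.eq_zero_of_mem_frontier v (hν.segment_subset_frontier hv)
  exact (hu.contDiffAt w (segment_subset_convexHull (by simp) (by simp) hw)).differentiableAt
    two_ne_zero

lemma inner_pohozaevField (hu : IsDirichletEigenfunction h u (convexHull ℝ {x, y, z}))
    (hν : IsOutwardNormal x y z ν) (hxy : x ≠ y) (p : E) (hw : w ∈ segment ℝ x y) :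
    ⟪pohozaevField h u p w, ν⟫ = ⟪w - p, ν⟫ * (h * ⟪∇ u w, ν⟫) ^ 2 :=
  inner_pohozaevField_of_gradient_eq_smul
    (hu.eq_zero_of_mem_frontier w (hν.segment_subset_frontier hw)) hν.norm_eq_one
    (hu.gradient_eq_inner_smul hν hxy hw) h p

lemma divergence_pohozaevField {T : Set E} (hu : IsDirichletEigenfunction h u T) (p : E)
    (hw : w ∈ T) : divergence (pohozaevField h u p) w = 2 * u w ^ 2 := by
  rw [_root_.divergence_pohozaevField (hu.contDiffAt w hw), (Fact.out : finrank ℝ E = 2)]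
  linear_combination (-2 * ⟪w - p, ∇ u w⟫) * hu.neg_sq_mul_laplacian w hw

end IsDirichletEigenfunction

variable [MeasurableSpace E] [BorelSpace E] {νxy νyz νzx : E}

-- The two sides through `z` carry no flux because `⟪w - z, ν⟫` vanishes on them.
lemma setIntegral_divergence_triangle_of_inner_eq_mul {V : E → E} {f g k : E → ℝ}
    (hxy : IsOutwardNormal x y z νxy) (hyz : IsOutwardNormal y z x νyz)
    (hzx : IsOutwardNormal z x y νzx) (hV : ∀ w ∈ convexHull ℝ {x, y, z}, ContDiffAt ℝ 1 V w)
    (hVxy : ∀ w ∈ segment ℝ x y, ⟪V w, νxy⟫ = ⟪w - z, νxy⟫ * f w)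
    (hVyz : ∀ w ∈ segment ℝ y z, ⟪V w, νyz⟫ = ⟪w - z, νyz⟫ * g w)
    (hVzx : ∀ w ∈ segment ℝ z x, ⟪V w, νzx⟫ = ⟪w - z, νzx⟫ * k w) :
    ∫ w in convexHull ℝ {x, y, z}, divergence V w =
      ⟪x - z, νxy⟫ * ∫ w in segment ℝ x y, f w ∂μH[1] := by
  have hbase : ∀ w ∈ segment ℝ x y, ⟪V w, νxy⟫ = ⟪x - z, νxy⟫ * f w := fun w hw ↦ by
    rw [hVxy w hw, inner_sub_left, hxy.inner_eq_of_mem_segment hw, inner_sub_left]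
  have hyz_zero : ∀ w ∈ segment ℝ y z, ⟪V w, νyz⟫ = 0 := fun w hw ↦ by
    rw [hVyz w hw, hyz.inner_sub_eq_zero hw (right_mem_segment ℝ y z), zero_mul]
  have hzx_zero : ∀ w ∈ segment ℝ z x, ⟪V w, νzx⟫ = 0 := fun w hw ↦ by
    rw [hVzx w hw, hzx.inner_sub_eq_zero hw (left_mem_segment ℝ z x), zero_mul]
  have hmeas : MeasurableSet (segment ℝ x y) :=
    convexHull_pair (𝕜 := ℝ) x y ▸ ((toFinite _).isClosed_convexHull ℝ).measurableSet
  rw [setIntegral_divergence_triangle hxy hyz hzx hV, setIntegral_congr_fun hmeas hbase,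
    integral_const_mul, setIntegral_eq_zero_of_forall_eq_zero hyz_zero,
    setIntegral_eq_zero_of_forall_eq_zero hzx_zero, add_zero, add_zero]

lemma two_mul_volume_triangle (hxy : IsOutwardNormal x y z νxy)
    (hyz : IsOutwardNormal y z x νyz) (hzx : IsOutwardNormal z x y νzx) :
    2 * volume.real (convexHull ℝ {x, y, z}) = ⟪x - z, νxy⟫ * dist x y := by
  have hdiv (w : E) : divergence (fun v ↦ v - z) w = 2 := by
    rw [divergence_sub_const, (Fact.out : finrank ℝ E = 2), Nat.cast_ofNat]
  have hflux := setIntegral_divergence_triangle_of_inner_eq_mul hxy hyz hzx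
    (V := fun w ↦ w - z) (f := 1) (g := 1) (k := 1)
    (fun w _ ↦ contDiffAt_id.sub contDiffAt_const)
    (fun w _ ↦ (mul_one _).symm) (fun w _ ↦ (mul_one _).symm) (fun w _ ↦ (mul_one _).symm)
  have hlength : μH[1].real (segment ℝ x y) = dist x y := by
    rw [measureReal_def, hausdorffMeasure_segment, edist_dist, ENNReal.toReal_ofReal dist_nonneg]
  simpa only [hdiv, setIntegral_const, smul_eq_mul, mul_comm _ (2 : ℝ), Pi.one_apply, mul_one,
    hlength] using hflux

namespace IsDirichletEigenfunction

variable {h : ℝ} {u : E → ℝ}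

theorem two_mul_setIntegral_sq (hu : IsDirichletEigenfunction h u (convexHull ℝ {x, y, z}))
    (hxy : IsOutwardNormal x y z νxy) (hyz : IsOutwardNormal y z x νyz)
    (hzx : IsOutwardNormal z x y νzx) :
    2 * ∫ w in convexHull ℝ {x, y, z}, u w ^ 2 =
      ⟪x - z, νxy⟫ * ∫ w in segment ℝ x y, (h * ⟪∇ u w, νxy⟫) ^ 2 ∂μH[1] := by
  have hrot : ({y, z, x} : Set E) = {x, y, z} := by grind
  have hrot' : ({z, x, y} : Set E) = {x, y, z} := by grind
  have hmeas : MeasurableSet (convexHull ℝ {x, y, z}) :=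
    ((toFinite _).isClosed_convexHull ℝ).measurableSet
  rw [← integral_const_mul,
    ← setIntegral_congr_fun hmeas fun w hw ↦ hu.divergence_pohozaevField z hw]
  exact setIntegral_divergence_triangle_of_inner_eq_mul hxy hyz hzx
    (fun w hw ↦ contDiffAt_pohozaevField (hu.contDiffAt w hw) h z)
    (fun w ↦ hu.inner_pohozaevField hxy hyz.ne z)
    (fun w ↦ (hrot ▸ hu).inner_pohozaevField hyz hzx.ne z)
    (fun w ↦ (hrot' ▸ hu).inner_pohozaevField hzx hxy.ne z)

theorem volume_mul_neumann_mass_eq (hu : IsDirichletEigenfunction h u (convexHull ℝ {x, y, z}))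
    (hxy : IsOutwardNormal x y z νxy) (hyz : IsOutwardNormal y z x νyz)
    (hzx : IsOutwardNormal z x y νzx) :
    volume.real (convexHull ℝ {x, y, z}) *
        ∫ w in segment ℝ x y, (h * ⟪∇ u w, νxy⟫) ^ 2 ∂μH[1] =
      dist x y * ∫ w in convexHull ℝ {x, y, z}, u w ^ 2 := by
  linear_combination (∫ w in segment ℝ x y, (h * ⟪∇ u w, νxy⟫) ^ 2 ∂μH[1]) / 2 *
    two_mul_volume_triangle hxy hyz hzx - dist x y / 2 * hu.two_mul_setIntegral_sq hxy hyz hzx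

end IsDirichletEigenfunction

end DirichletEigenfunction

section RigidMotions

open Module Set
open scoped Congruent

variable {E ι : Type*} [NormedAddCommGroup E] [InnerProductSpace ℝ E]

lemma inner_linearCombination_eq {v w : ι → E} (hvw : ∀ i j, ⟪v i, v j⟫ = ⟪w i, w j⟫)
    (c d : ι →₀ ℝ) :
    ⟪Finsupp.linearCombination ℝ v c, Finsupp.linearCombination ℝ v d⟫ =
      ⟪Finsupp.linearCombination ℝ w c, Finsupp.linearCombination ℝ w d⟫ := by
  simp only [Finsupp.linearCombination_apply, Finsupp.sum_inner, Finsupp.inner_sum,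
    real_inner_smul_left, real_inner_smul_right, hvw]

lemma inner_sub_sub_eq_of_congruent {P Q : ι → E} (hPQ : P ≅ Q) (i j k : ι) :
    ⟪P j - P i, P k - P i⟫ = ⟪Q j - Q i, Q k - Q i⟫ := by
  simp only [real_inner_eq_norm_mul_self_add_norm_mul_self_sub_norm_sub_mul_self_div_two,
    sub_sub_sub_cancel_right, ← dist_eq_norm, hPQ.dist_eq]

variable [FiniteDimensional ℝ E]

lemma exists_linearIsometryEquiv_of_inner_eq {v w : ι → E}
    (hvw : ∀ i j, ⟪v i, v j⟫ = ⟪w i, w j⟫) : ∃ φ : E ≃ₗᵢ[ℝ] E, ∀ i, φ (v i) = w i := by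
  let f := Finsupp.linearCombination ℝ v
  let g := Finsupp.linearCombination ℝ w
  have hker : f.ker ≤ g.ker := fun c hc ↦ by
    rw [LinearMap.mem_ker, ← inner_self_eq_zero (𝕜 := ℝ)] at hc ⊢
    rwa [← inner_linearCombination_eq hvw]
  let L : f.range →ₗ[ℝ] E := f.ker.liftQ g hker ∘ₗ f.quotKerEquivRange.symm
  have hL (c) : L (f.rangeRestrict c) = g c :=
    congr(f.ker.liftQ g hker $(f.quotKerEquivRange_symm_apply_image c _))
  let φ : f.range →ₗᵢ[ℝ] E := L.isometryOfInner <| by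
    rintro ⟨_, c, rfl⟩ ⟨_, d, rfl⟩
    exact (congr(⟪$(hL c), $(hL d)⟫)).trans (inner_linearCombination_eq hvw c d).symm
  refine ⟨φ.extend.toLinearIsometryEquiv rfl, fun i ↦ ?_⟩
  have hv : f (.single i 1) = v i := by simp [f]
  have hw : g (.single i 1) = w i := by simp [g]
  rw [← hv, ← hw, ← hL]
  exact φ.extend_apply (f.rangeRestrict (.single i 1))

theorem exists_affineIsometryEquiv_of_congruent {P Q : ι → E} (hPQ : P ≅ Q) :
    ∃ φ : E ≃ᵃⁱ[ℝ] E, φ ∘ P = Q := by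
  rcases isEmpty_or_nonempty ι with _ | ⟨⟨i⟩⟩
  · exact ⟨.refl ℝ E, Subsingleton.elim _ _⟩
  obtain ⟨φ, hφ⟩ := exists_linearIsometryEquiv_of_inner_eq (inner_sub_sub_eq_of_congruent hPQ i)
  refine ⟨(AffineIsometryEquiv.vaddConst ℝ (P i)).symm.trans
    (φ.toAffineIsometryEquiv.trans (.vaddConst ℝ (Q i))), funext fun j ↦ ?_⟩
  simp [hφ]

theorem exists_affineIsometryEquiv_image_convexHull_eq {P Q : ι → E} (hPQ : P ≅ Q) :
    ∃ φ : E ≃ᵃⁱ[ℝ] E, φ '' convexHull ℝ (range P) = convexHull ℝ (range Q) := by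
  obtain ⟨φ, rfl⟩ := exists_affineIsometryEquiv_of_congruent hPQ
  refine ⟨φ, ?_⟩
  rw [range_comp]
  exact AffineMap.image_convexHull φ.toAffineEquiv.toAffineMap (range P)

variable [MeasurableSpace E] [BorelSpace E]

lemma volume_convexHull_eq_of_congruent {P Q : ι → E} (hPQ : P ≅ Q) :
    volume.real (convexHull ℝ (range P)) = volume.real (convexHull ℝ (range Q)) := by
  obtain ⟨φ, hφ⟩ := exists_affineIsometryEquiv_image_convexHull_eq hPQ
  rw [measureReal_def, measureReal_def, ← hφ,
    ← InnerProductSpace.euclideanHausdorffMeasure_eq_volume,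
    φ.isometry.euclideanHausdorffMeasure_image]

theorem volume_convexHull_eq_pow_mul_of_dist_eq_mul {P Q : ι → E} {r : ℝ} (hr : 0 ≤ r)
    (hPQ : ∀ i j, dist (Q i) (Q j) = r * dist (P i) (P j)) :
    volume.real (convexHull ℝ (range Q)) =
      r ^ finrank ℝ E * volume.real (convexHull ℝ (range P)) := by
  have hcongr : (fun i ↦ r • P i) ≅ Q := congruent_iff_dist_eq.2 fun i j ↦ by
    rw [hPQ, dist_smul₀, Real.norm_of_nonneg hr]
  rw [← volume_convexHull_eq_of_congruent hcongr, range_smul, convexHull_smul, measureReal_def,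
    Measure.addHaar_smul, ENNReal.toReal_mul, ENNReal.toReal_ofReal (abs_nonneg _),
    abs_of_nonneg (pow_nonneg hr _), measureReal_def]

end RigidMotions

section Triangles

open Module Set
open scoped Gradient

attribute [local instance] FiniteDimensional.of_fact_finrank_eq_two

variable {E : Type*} [NormedAddCommGroup E] [InnerProductSpace ℝ E] [Fact (finrank ℝ E = 2)]
  [MeasurableSpace E] [BorelSpace E] {P Q : Fin 3 → E} {ν νP νQ : Fin 3 → Fin 3 → E}

lemma range_fin_three_eq {α : Type*} (P : Fin 3 → α) {i j k : Fin 3} (hij : i ≠ j) (hki : k ≠ i)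
    (hkj : k ≠ j) : range P = {P i, P j, P k} := by
  have huniv : (univ : Set (Fin 3)) = {i, j, k} := by
    ext l
    simp only [mem_univ, mem_insert_iff, mem_singleton_iff, true_iff]
    omega
  rw [← image_univ, huniv, image_insert_eq, image_pair]

lemma volume_convexHull_range_pos
    (hν : ∀ i j k, i ≠ j → k ≠ i → k ≠ j → IsOutwardNormal (P i) (P j) (P k) (ν i j)) :
    0 < volume.real (convexHull ℝ (range P)) := by
  have h₀₁ := hν 0 1 2 (by decide) (by decide) (by decide)
  have h₁₂ := hν 1 2 0 (by decide) (by decide) (by decide)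
  have h₂₀ := hν 2 0 1 (by decide) (by decide) (by decide)
  have harea := two_mul_volume_triangle h₀₁ h₁₂ h₂₀
  have hheight : 0 < ⟪P 0 - P 2, ν 0 1⟫ := by
    rw [← neg_sub, inner_neg_left, neg_pos]
    exact h₀₁.inner_neg
  rw [range_fin_three_eq P (i := 0) (j := 1) (k := 2) (by decide) (by decide) (by decide)]
  linarith [mul_pos hheight (dist_pos.2 h₁₂.ne)]

lemma IsDirichletEigenfunction.volume_range_mul_neumann_mass_eq {h : ℝ} {u : E → ℝ}
    (hu : IsDirichletEigenfunction h u (convexHull ℝ (range P)))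
    (hν : ∀ i j k, i ≠ j → k ≠ i → k ≠ j → IsOutwardNormal (P i) (P j) (P k) (ν i j))
    {i j : Fin 3} (hij : i ≠ j) :
    volume.real (convexHull ℝ (range P)) *
        ∫ w in segment ℝ (P i) (P j), (h * ⟪∇ u w, ν i j⟫) ^ 2 ∂μH[1] =
      dist (P i) (P j) * ∫ w in convexHull ℝ (range P), u w ^ 2 := by
  obtain ⟨k, hki, hkj⟩ : ∃ k, k ≠ i ∧ k ≠ j := by decide +revert
  rw [range_fin_three_eq P hij hki hkj] at hu ⊢
  exact hu.volume_mul_neumann_mass_eq (hν i j k hij hki hkj) (hν j k i hkj.symm hij hki.symm)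
    (hν k i j hki hkj.symm hij.symm)

lemma dist_eq_div_mul_dist_of_neumann_mass_eq
    (hνP : ∀ i j k, i ≠ j → k ≠ i → k ≠ j → IsOutwardNormal (P i) (P j) (P k) (νP i j))
    (hνQ : ∀ i j k, i ≠ j → k ≠ i → k ≠ j → IsOutwardNormal (Q i) (Q j) (Q k) (νQ i j))
    {h h' : ℝ} {u u' : E → ℝ}
    (hu : IsDirichletEigenfunction h u (convexHull ℝ (range P)))
    (hu' : IsDirichletEigenfunction h' u' (convexHull ℝ (range Q)))
    (hnorm : ∫ x in convexHull ℝ (range P), u x ^ 2 = 1)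
    (hnorm' : ∫ x in convexHull ℝ (range Q), u' x ^ 2 = 1)
    (hdata : ∀ i j, i ≠ j →
      ∫ x in segment ℝ (P i) (P j), (h * ⟪∇ u x, νP i j⟫) ^ 2 ∂μH[1] =
        ∫ x in segment ℝ (Q i) (Q j), (h' * ⟪∇ u' x, νQ i j⟫) ^ 2 ∂μH[1]) (i j : Fin 3) :
    dist (Q i) (Q j) =
      volume.real (convexHull ℝ (range Q)) / volume.real (convexHull ℝ (range P)) *
        dist (P i) (P j) := by
  rcases eq_or_ne i j with rfl | hij
  · rw [dist_self, dist_self, mul_zero]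
  have hmass := hu.volume_range_mul_neumann_mass_eq hνP hij
  have hmass' := hu'.volume_range_mul_neumann_mass_eq hνQ hij
  rw [hnorm, mul_one] at hmass
  rw [hnorm', mul_one, ← hdata i j hij] at hmass'
  rw [← hmass, ← hmass', ← mul_assoc, div_mul_cancel₀ _ (volume_convexHull_range_pos hνP).ne']

theorem neumann_mass_determines_triangle_general
    (hνP : ∀ i j k, i ≠ j → k ≠ i → k ≠ j → IsOutwardNormal (P i) (P j) (P k) (νP i j))
    (hνQ : ∀ i j k, i ≠ j → k ≠ i → k ≠ j → IsOutwardNormal (Q i) (Q j) (Q k) (νQ i j))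
    {h h' : ℝ} {u u' : E → ℝ}
    (hu : IsDirichletEigenfunction h u (convexHull ℝ (range P)))
    (hu' : IsDirichletEigenfunction h' u' (convexHull ℝ (range Q)))
    (hnorm : ∫ x in convexHull ℝ (range P), u x ^ 2 = 1)
    (hnorm' : ∫ x in convexHull ℝ (range Q), u' x ^ 2 = 1)
    (hdata : ∀ i j, i ≠ j →
      ∫ x in segment ℝ (P i) (P j), (h * ⟪∇ u x, νP i j⟫) ^ 2 ∂μH[1] =
        ∫ x in segment ℝ (Q i) (Q j), (h' * ⟪∇ u' x, νQ i j⟫) ^ 2 ∂μH[1]) :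
    (∀ i j, dist (P i) (P j) = dist (Q i) (Q j)) ∧
      ∃ φ : E ≃ᵢ E, φ '' convexHull ℝ (range P) = convexHull ℝ (range Q) := by
  have hsim := dist_eq_div_mul_dist_of_neumann_mass_eq hνP hνQ hu hu' hnorm hnorm' hdata
  have hvolP := volume_convexHull_range_pos hνP
  have hvolQ := volume_convexHull_range_pos hνQ
  have hratio :
      volume.real (convexHull ℝ (range Q)) / volume.real (convexHull ℝ (range P)) = 1 := by
    have hscale := volume_convexHull_eq_pow_mul_of_dist_eq_mul (by positivity) hsim
    rw [(Fact.out : finrank ℝ E = 2)] at hscale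
    field_simp at hscale ⊢
    exact hscale.symm
  have hdist (i j : Fin 3) : dist (P i) (P j) = dist (Q i) (Q j) := by
    rw [hsim, hratio, one_mul]
  obtain ⟨φ, hφ⟩ := exists_affineIsometryEquiv_image_convexHull_eq (congruent_iff_dist_eq.2 hdist)
  exact ⟨hdist, φ.toIsometryEquiv, hφ⟩

end Triangles

section EuclideanSpace

open InnerProductSpace
open scoped Laplacian

variable {n : ℕ} {u : EuclideanSpace ℝ (Fin n) → ℝ}

lemma lap_eq_laplacian {x : EuclideanSpace ℝ (Fin n)} (hu : ContDiffAt ℝ 2 u x) :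
    lap u x = Δ u x := by
  have hDu : DifferentiableAt ℝ (fderiv ℝ u) x :=
    (hu.fderiv_right (m := 1) (by norm_num)).differentiableAt one_ne_zero
  rw [laplacian_eq_iteratedFDeriv_orthonormalBasis u (EuclideanSpace.basisFun (Fin n) ℝ)]
  refine Finset.sum_congr rfl fun i _ ↦ ?_
  rw [fderiv_clm_apply hDu (differentiableAt_const _), iteratedFDeriv_two_apply]
  simp

lemma isDirichletEigenfunction_of_contDiffOn {h : ℝ} {T U : Set (EuclideanSpace ℝ (Fin n))}
    (hU : IsOpen U) (hTU : T ⊆ U) (hsmooth : ContDiffOn ℝ 2 u U)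
    (heig : ∀ x ∈ T, -h ^ 2 * lap u x = u x) (hdirichlet : ∀ x ∈ frontier T, u x = 0) :
    IsDirichletEigenfunction h u T := by
  have hC2 : ∀ x ∈ T, ContDiffAt ℝ 2 u x := fun x hx ↦ hsmooth.contDiffAt (hU.mem_nhds (hTU hx))
  exact ⟨hC2, fun x hx ↦ lap_eq_laplacian (hC2 x hx) ▸ heig x hx, hdirichlet⟩

end EuclideanSpace

/-- **The norms of the Neumann data determine the triangle.**
Let `T = conv{P₀,P₁,P₂}` and `T' = conv{Q₀,Q₁,Q₂}` be two nondegenerate triangles in `ℝ²`,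
with `νP i j` (resp. `νQ i j`) the outward unit normal to the side `[Pᵢ, Pⱼ]`
(resp. `[Qᵢ, Qⱼ]`), and let `u`, `u'` be normalized Dirichlet eigenfunctions on `T`, `T'`.
If for each side `∫_{[Pᵢ,Pⱼ]} |h ∂_ν u|² dS = ∫_{[Qᵢ,Qⱼ]} |h' ∂_ν u'|² dS`, then
corresponding side lengths agree, i.e. the triangles are congruent: `T'` is the image of
`T` under an isometry of `ℝ²`. -/
theorem neumann_mass_determines_triangle
    (P Q : Fin 3 → EuclideanSpace ℝ (Fin 2))
    (hP : AffineIndependent ℝ P) (hQ : AffineIndependent ℝ Q)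
    (T T' : Set (EuclideanSpace ℝ (Fin 2)))
    (hT : T = convexHull ℝ (Set.range P)) (hT' : T' = convexHull ℝ (Set.range Q))
    (νP νQ : Fin 3 → Fin 3 → EuclideanSpace ℝ (Fin 2))
    (hνP_unit : ∀ i j, i ≠ j → ‖νP i j‖ = 1)
    (hνP_tangent : ∀ i j, i ≠ j → ⟪P i - P j, νP i j⟫ = 0)
    (hνP_outward : ∀ i j k, i ≠ j → k ≠ i → k ≠ j → ⟪P k - P i, νP i j⟫ < 0)
    (hνQ_unit : ∀ i j, i ≠ j → ‖νQ i j‖ = 1)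
    (hνQ_tangent : ∀ i j, i ≠ j → ⟪Q i - Q j, νQ i j⟫ = 0)
    (hνQ_outward : ∀ i j k, i ≠ j → k ≠ i → k ≠ j → ⟪Q k - Q i, νQ i j⟫ < 0)
    (h h' : ℝ) (hh : 0 < h) (hh' : 0 < h')
    (u u' : EuclideanSpace ℝ (Fin 2) → ℝ)
    (U U' : Set (EuclideanSpace ℝ (Fin 2)))
    (hU : IsOpen U) (hTU : T ⊆ U) (hU' : IsOpen U') (hTU' : T' ⊆ U')
    (hsmooth : ContDiffOn ℝ (⊤ : ℕ∞) u U) (hsmooth' : ContDiffOn ℝ (⊤ : ℕ∞) u' U')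
    (heig : ∀ x ∈ T, -h ^ 2 * lap u x = u x)
    (heig' : ∀ x ∈ T', -h' ^ 2 * lap u' x = u' x)
    (hdirichlet : ∀ x ∈ frontier T, u x = 0)
    (hdirichlet' : ∀ x ∈ frontier T', u' x = 0)
    (hnorm : ∫ x in T, (u x) ^ 2 = 1) (hnorm' : ∫ x in T', (u' x) ^ 2 = 1)
    (hdata : ∀ i j, i ≠ j →
      ∫ x in segment ℝ (P i) (P j), (h * ⟪gradient u x, νP i j⟫) ^ 2 ∂(μH[(1 : ℝ)]) =
      ∫ x in segment ℝ (Q i) (Q j), (h' * ⟪gradient u' x, νQ i j⟫) ^ 2 ∂(μH[(1 : ℝ)])) :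
    (∀ i j, dist (P i) (P j) = dist (Q i) (Q j)) ∧
      ∃ φ : EuclideanSpace ℝ (Fin 2) ≃ᵢ EuclideanSpace ℝ (Fin 2), φ '' T = T' := by
  subst hT hT'
  have : Fact (Module.finrank ℝ (EuclideanSpace ℝ (Fin 2)) = 2) := ⟨finrank_euclideanSpace_fin⟩
  have htwo : (2 : WithTop ℕ∞) ≤ (⊤ : ℕ∞) := WithTop.coe_le_coe.2 le_top
  exact neumann_mass_determines_triangle_general
    (fun i j k hij hki hkj ↦
      ⟨hνP_unit i j hij, hνP_tangent i j hij, hνP_outward i j k hij hki hkj⟩)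
    (fun i j k hij hki hkj ↦
      ⟨hνQ_unit i j hij, hνQ_tangent i j hij, hνQ_outward i j k hij hki hkj⟩)
    (isDirichletEigenfunction_of_contDiffOn hU hTU (hsmooth.of_le htwo) heig hdirichlet)
    (isDirichletEigenfunction_of_contDiffOn hU' hTU' (hsmooth'.of_le htwo) heig' hdirichlet')
    hnorm hnorm' hdata
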